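/- (Cyclicity of parabolic non-automorphisms.) Let b ∈ ℂ with Re(b) > 0 and let φ(w) = w + b. Then the composition operator C_φ is cyclic on H²(ℂ₊) with cyclic vector k₁(w) = 1/(w+1): for every g ∈ H²(ℂ₊) and every ε > 0 there is a finite linear combination h of the functions k₁ ∘ φ^[n] = (w ↦ 1/(w + 1 + n·b)), n ∈ ℕ, with ‖g − h‖ < ε. -/

import Mathlib

open Complex MeasureTheory

/-- The square of the `H²(ℂ₊)` norm: `sup_{x>0} ∫ |f(x+iy)|² dy`, valued in `ℝ≥0∞`. -/
noncomputable def H2normSq (f : ℂ → ℂ) : ENNReal :=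
  ⨆ x ∈ Set.Ioi (0 : ℝ), ∫⁻ y : ℝ, (‖f ((x : ℂ) + (y : ℂ) * Complex.I)‖₊ : ENNReal) ^ 2

/-- Membership in the Hardy space `H²(ℂ₊)` of the right half-plane. -/
def MemH2 (f : ℂ → ℂ) : Prop :=
  DifferentiableOn ℂ f {w : ℂ | 0 < w.re} ∧ H2normSq f < ⊤

/-!
By Paley–Wiener and Plancherel, the Laplace transform maps `L²(0, ∞)` onto `H²(ℂ₊)` with control
of the norm. Under it `w ↦ 1 / (w + a)` is the image of `t ↦ exp (-a t)`, and the transform of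
`v ∈ L²` at `conj a` is the inner product of this exponential with `v`. So if `v` is orthogonal to
all exponentials with exponents `1 + n b`, its transform vanishes at the points `conj (1 + n b)`.
A nonzero function in `H²(ℂ₊)` has zeros with `∑ Re a / (1 + |a|)² < ∞`, which fails here like the
harmonic series, so the transform of `v` is zero. Hence, in an orthogonal decomposition of a
preimage of `g`, only the part in the closed span of the exponentials contributes to `g`.
-/

open Set Filter Topology
open scoped ENNReal InnerProductSpace FourierTransform ComplexConjugate Real

section HilbertSpace

variable {𝕜 H ι : Type*} [RCLike 𝕜] [NormedAddCommGroup H] [InnerProductSpace 𝕜 H]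
  [CompleteSpace H]

lemma exists_forall_inner_eq_of_tendsto {κ : Type*} {l : Filter κ} [l.NeBot] {u : κ → H} {C : ℝ}
    (hu : ∀ k, ‖u k‖ ≤ C) {e : ι → H} {c : ι → 𝕜}
    (hc : ∀ i, Tendsto (fun k => ⟪e i, u k⟫_𝕜) l (𝓝 (c i))) :
    ∃ v : H, ∀ i, ⟪e i, v⟫_𝕜 = c i := by
  let U : κ → WeakDual 𝕜 H := fun k => StrongDual.toWeakDual (InnerProductSpace.toDual 𝕜 H (u k))
  have hU : ∀ k, U k ∈ WeakDual.toStrongDual ⁻¹' Metric.closedBall 0 C := fun k => by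
    simpa [U] using hu k
  obtain ⟨L, -, hL⟩ := (WeakDual.isCompact_closedBall (𝕜 := 𝕜) (0 : StrongDual 𝕜 H) C)
    |>.ultrafilter_le_nhds ((Ultrafilter.of l).map U)
      (tendsto_principal.mpr (Eventually.of_forall hU))
  refine ⟨(InnerProductSpace.toDual 𝕜 H).symm (WeakDual.toStrongDual L), fun i => ?_⟩
  have hlim : Tendsto (fun k => ⟪u k, e i⟫_𝕜) (Ultrafilter.of l) (𝓝 (L (e i))) :=
    ((WeakDual.eval_continuous (e i)).tendsto L).comp hL
  have hconj : Tendsto (fun k => ⟪u k, e i⟫_𝕜) (Ultrafilter.of l) (𝓝 (conj (c i))) := by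
    simpa only [Function.comp_def, inner_conj_symm] using
      (RCLike.continuous_conj.tendsto (c i)).comp ((hc i).mono_left (Ultrafilter.of_le l))
  rw [← inner_conj_symm, InnerProductSpace.toDual_symm_apply]
  exact (congrArg conj (tendsto_nhds_unique hlim hconj)).trans (RCLike.conj_conj _)

lemma exists_mem_span_exists_forall_inner_eq_zero (e : ι → H) (v : H) {ε : ℝ} (hε : 0 < ε) :
    ∃ u ∈ Submodule.span 𝕜 (range e), ∃ v' : H, (∀ i, ⟪e i, v'⟫_𝕜 = 0) ∧ ‖v - v' - u‖ < ε := by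
  set V := (Submodule.span 𝕜 (range e)).topologicalClosure
  have : CompleteSpace V := (Submodule.isClosed_topologicalClosure _).completeSpace_coe
  obtain ⟨p, hp, v', hv', rfl⟩ := V.exists_add_mem_mem_orthogonal v
  obtain ⟨u, hu, hpu⟩ := Metric.mem_closure_iff.mp hp ε hε
  refine ⟨u, hu, v', fun i => V.mem_orthogonal v' |>.mp hv' _ ?_, ?_⟩
  · exact Submodule.le_topologicalClosure _ (Submodule.subset_span ⟨i, rfl⟩)
  · rwa [add_sub_cancel_right, ← dist_eq_norm]

end HilbertSpace

section L2

variable {α F : Type*} [MeasurableSpace α] {μ : Measure α} [NormedAddCommGroup F]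

lemma eLpNorm_two_sq (u : α → F) : eLpNorm u 2 μ ^ 2 = ∫⁻ t, ‖u t‖ₑ ^ 2 ∂μ := by
  simpa using eLpNorm_nnreal_pow_eq_lintegral (f := u) (μ := μ) (p := 2) two_ne_zero

lemma memLp_two_iff_lintegral_lt_top {u : α → F} (hu : AEStronglyMeasurable u μ) :
    MemLp u 2 μ ↔ ∫⁻ t, ‖u t‖ₑ ^ 2 ∂μ < ⊤ := by
  rw [← eLpNorm_two_sq, ENNReal.pow_lt_top_iff, or_iff_left two_ne_zero, MemLp, and_iff_right hu]

lemma enorm_toLp_sq {u : α → F} (hu : MemLp u 2 μ) :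
    ‖hu.toLp u‖ₑ ^ 2 = ∫⁻ t, ‖u t‖ₑ ^ 2 ∂μ := by
  rw [Lp.enorm_toLp, eLpNorm_two_sq]

end L2

section FourierTransform

variable {V F : Type*} [NormedAddCommGroup V] [InnerProductSpace ℝ V] [FiniteDimensional ℝ V]
  [MeasurableSpace V] [BorelSpace V] [NormedAddCommGroup F] [InnerProductSpace ℂ F]
  [CompleteSpace F]

open scoped SchwartzMap

-- Both sides define the same tempered distribution.
lemma fourier_toLp_ae_eq {u : V → F} (hu : Integrable u) (hu₂ : MemLp u 2) :
    (𝓕 (hu₂.toLp u) : Lp F 2 (volume : Measure V)) =ᵐ[volume] 𝓕 u := by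
  have hcont : Continuous (𝓕 u) := VectorFourier.fourierIntegral_continuous
    Real.continuous_fourierChar (by exact continuous_inner) hu
  refine ae_eq_of_integral_contDiff_smul_eq
    ((Lp.memLp (𝓕 (hu₂.toLp u) : Lp F 2 (volume : Measure V))).locallyIntegrable one_le_two)
    hcont.locallyIntegrable fun g hg hg' => ?_
  let φ : 𝓢(V, ℂ) := (hg'.comp_left (g := Complex.ofRealCLM) rfl).toSchwartzMap
    (Complex.ofRealCLM.contDiff.comp hg)
  have hφ : ∀ x (y : F), g x • y = φ x • y := fun x y => (Complex.coe_smul (g x) y).symm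
  calc ∫ x, g x • (𝓕 (hu₂.toLp u) : Lp F 2 (volume : Measure V)) x
      = ((𝓕 (hu₂.toLp u) : Lp F 2 (volume : Measure V)) : 𝓢'(V, F)) φ := by
        simp only [hφ, Lp.toTemperedDistribution_apply]
    _ = ∫ x, 𝓕 φ x • hu₂.toLp u x := by
        rw [← Lp.fourier_toTemperedDistribution_eq, TemperedDistribution.fourier_apply,
          Lp.toTemperedDistribution_apply]
    _ = ∫ x, 𝓕 φ x • u x := integral_congr_ae <| by
        filter_upwards [hu₂.coeFn_toLp] with x hx using by rw [hx]
    _ = ∫ x, φ x • 𝓕 u x := by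
        simpa [SchwartzMap.fourier_coe] using! VectorFourier.integral_fourierIntegral_smul_eq_flip
          (L := innerₗ V) Real.continuous_fourierChar continuous_inner φ.integrable hu
    _ = ∫ x, g x • 𝓕 u x := by simp only [hφ]

lemma lintegral_enorm_fourier_sq {u : V → F} (hu : Integrable u) (hu₂ : MemLp u 2) :
    ∫⁻ s, ‖𝓕 u s‖ₑ ^ 2 = ∫⁻ t, ‖u t‖ₑ ^ 2 := by
  have h𝓕 : MemLp (𝓕 u) 2 := (Lp.memLp _).ae_eq (fourier_toLp_ae_eq hu hu₂)
  have h𝓕' : h𝓕.toLp (𝓕 u) = 𝓕 (hu₂.toLp u) :=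
    Lp.ext (h𝓕.coeFn_toLp.trans (fourier_toLp_ae_eq hu hu₂).symm)
  rw [← enorm_toLp_sq h𝓕, ← enorm_toLp_sq hu₂, h𝓕', ← ofReal_norm, Lp.norm_fourier_eq, ofReal_norm]

end FourierTransform

lemma measurable_indicator_of_continuousOn {X Y : Type*} [TopologicalSpace X] [MeasurableSpace X]
    [OpensMeasurableSpace X] [TopologicalSpace Y] [MeasurableSpace Y] [BorelSpace Y] [Zero Y]
    {s : Set X} {f : X → Y} (hs : MeasurableSet s) (hf : ContinuousOn f s) :
    Measurable (s.indicator f) := by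
  classical
  rw [← piecewise_eq_indicator]
  exact hf.measurable_piecewise continuousOn_const hs

section MeanValue

variable {E : Type*} [NormedAddCommGroup E] [NormedSpace ℂ E] [CompleteSpace E]

lemma ofReal_two_pi_mul_enorm_le_lintegral_circleMap {f : ℂ → E} {c : ℂ} {r : ℝ}
    (hf : DiffContOnCl ℂ f (Metric.ball c |r|)) :
    ENNReal.ofReal (2 * π) * ‖f c‖ₑ ≤ ∫⁻ θ in Ioo (-π) π, ‖f (circleMap c r θ)‖ₑ := by
  have hmean : ∫ θ in Ioo (-π) π, f (circleMap c r θ) = (2 * π) • f c := by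
    have hper := ((periodic_circleMap c r).comp f).intervalIntegral_add_eq (-π) 0
    rw [zero_add, show -π + 2 * π = π by ring] at hper
    rw [← integral_Ioc_eq_integral_Ioo,
      ← intervalIntegral.integral_of_le (by linarith [Real.pi_pos])]
    refine hper.trans ?_
    rw [← hf.circleAverage, Real.circleAverage_def, smul_inv_smul₀ Real.two_pi_pos.ne']
    rfl
  calc ENNReal.ofReal (2 * π) * ‖f c‖ₑ = ‖(2 * π) • f c‖ₑ := by
        rw [enorm_smul, Real.enorm_eq_ofReal Real.two_pi_pos.le]
    _ ≤ ∫⁻ θ in Ioo (-π) π, ‖f (circleMap c r θ)‖ₑ := hmean ▸ enorm_integral_le_lintegral_enorm _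

lemma lintegral_ofReal_Ioo_zero {R : ℝ} (hR : 0 ≤ R) :
    ∫⁻ r in Ioo 0 R, ENNReal.ofReal r = ENNReal.ofReal (R ^ 2 / 2) := by
  rw [← ofReal_integral_eq_lintegral_ofReal, ← integral_Ioc_eq_integral_Ioo,
    ← intervalIntegral.integral_of_le hR, integral_id]
  · simp
  · exact (intervalIntegral.intervalIntegrable_id).1.mono_set Ioo_subset_Ioc_self
  · exact (ae_restrict_mem measurableSet_Ioo).mono fun r hr => hr.1.le

lemma ofReal_mul_enorm_le_lintegral_ball {f : ℂ → E} {c : ℂ} {R : ℝ} (hR : 0 ≤ R)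
    (hf : DifferentiableOn ℂ f (Metric.ball c R)) :
    ENNReal.ofReal (π * R ^ 2) * ‖f c‖ₑ ≤ ∫⁻ z in Metric.ball c R, ‖f z‖ₑ := by
  let F : ℂ → ℝ≥0∞ := (Metric.ball c R).indicator fun z => ‖f z‖ₑ
  have hF : Measurable F := measurable_indicator_of_continuousOn measurableSet_ball
    hf.continuousOn.enorm
  have hcirc : ∀ r ∈ Ioo 0 R, ∀ θ, F (circleMap c r θ) = ‖f (circleMap c r θ)‖ₑ := fun r hr θ =>
    indicator_of_mem (by simpa [circleMap, dist_eq_norm, abs_of_pos hr.1] using hr.2) _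
  calc ENNReal.ofReal (π * R ^ 2) * ‖f c‖ₑ
      = (∫⁻ r in Ioo 0 R, ENNReal.ofReal r) * (ENNReal.ofReal (2 * π) * ‖f c‖ₑ) := by
        rw [lintegral_ofReal_Ioo_zero hR, ← mul_assoc, ← ENNReal.ofReal_mul (by positivity)]
        ring_nf
    _ = ∫⁻ r in Ioo 0 R, ENNReal.ofReal r * (ENNReal.ofReal (2 * π) * ‖f c‖ₑ) :=
        (lintegral_mul_const _ ENNReal.measurable_ofReal).symm
    _ ≤ ∫⁻ r in Ioo 0 R, ENNReal.ofReal r * ∫⁻ θ in Ioo (-π) π, F (circleMap c r θ) := by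
        refine setLIntegral_mono' measurableSet_Ioo fun r hr => ?_
        simp only [hcirc r hr]
        gcongr
        refine ofReal_two_pi_mul_enorm_le_lintegral_circleMap (hf.diffContOnCl_ball ?_)
        exact Metric.closedBall_subset_ball (by simpa [abs_of_pos hr.1] using hr.2)
    _ ≤ ∫⁻ r in Ioi 0, ∫⁻ θ in Ioo (-π) π, ENNReal.ofReal r * F (circleMap c r θ) := by
        refine (lintegral_mono_set Ioo_subset_Ioi_self).trans' (lintegral_mono fun r => ?_)
        exact lintegral_const_mul_le _ _
    _ = ∫⁻ p in polarCoord.target, ENNReal.ofReal p.1 * F (circleMap c p.1 p.2) := by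
        rw [polarCoord_target, Measure.volume_eq_prod, setLIntegral_prod]
        fun_prop
    _ = ∫⁻ z, F (c + z) := by
        rw [← Complex.lintegral_comp_polarCoord_symm]
        simp [circleMap, exp_mul_I]
    _ = ∫⁻ z in Metric.ball c R, ‖f z‖ₑ := by
        rw [lintegral_add_left_eq_self, lintegral_indicator measurableSet_ball]

end MeanValue

section HardySpace

variable {f g : ℂ → ℂ} {a : ℂ} {x : ℝ}

lemma H2normSq_le_iff {C : ℝ≥0∞} :
    H2normSq f ≤ C ↔ ∀ x : ℝ, 0 < x → ∫⁻ y : ℝ, ‖f (x + y * I)‖ₑ ^ 2 ≤ C :=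
  iSup₂_le_iff

lemma lintegral_enorm_sq_le_H2normSq (f : ℂ → ℂ) (hx : 0 < x) :
    ∫⁻ y : ℝ, ‖f (x + y * I)‖ₑ ^ 2 ≤ H2normSq f :=
  H2normSq_le_iff.mp le_rfl x hx

lemma H2normSq_congr (hfg : EqOn f g {w : ℂ | 0 < w.re}) : H2normSq f = H2normSq g :=
  biSup_congr fun x hx => lintegral_congr fun y => by rw [hfg (by simpa using hx)]

lemma H2normSq_const_mul (c : ℂ) (f : ℂ → ℂ) :
    H2normSq (fun w => c * f w) = ‖c‖ₑ ^ 2 * H2normSq f := by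
  simp only [H2normSq, ENNReal.mul_iSup, ← enorm_eq_nnnorm, enorm_mul, mul_pow]
  refine biSup_congr fun x _ => lintegral_const_mul' _ _ (by simp)

lemma continuous_comp_verticalLine (hf : ContinuousOn f {w : ℂ | 0 < w.re}) (hx : 0 < x) :
    Continuous fun y : ℝ => f (x + y * I) :=
  hf.comp_continuous (by fun_prop) (by simpa using hx)

lemma H2normSq_sub_le (hf : DifferentiableOn ℂ f {w : ℂ | 0 < w.re}) (g : ℂ → ℂ) :
    H2normSq (fun w => f w - g w) ≤ 2 * H2normSq f + 2 * H2normSq g := by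
  refine H2normSq_le_iff.mpr fun x hx => ?_
  calc ∫⁻ y : ℝ, ‖f (x + y * I) - g (x + y * I)‖ₑ ^ 2
      ≤ ∫⁻ y : ℝ, (2 * ‖f (x + y * I)‖ₑ ^ 2 + 2 * ‖g (x + y * I)‖ₑ ^ 2) := by
        refine lintegral_mono fun y => (pow_le_pow_left' enorm_sub_le 2).trans ?_
        have h := ENNReal.rpow_add_le_mul_rpow_add_rpow ‖f (x + y * I)‖ₑ ‖g (x + y * I)‖ₑ one_le_two
        rw [show (2 : ℝ) - 1 = 1 by norm_num, ENNReal.rpow_one] at h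
        simpa only [ENNReal.rpow_two, mul_add] using h
    _ = 2 * (∫⁻ y : ℝ, ‖f (x + y * I)‖ₑ ^ 2) + 2 * ∫⁻ y : ℝ, ‖g (x + y * I)‖ₑ ^ 2 := by
        rw [lintegral_add_left, lintegral_const_mul' _ _ (by simp),
          lintegral_const_mul' _ _ (by simp)]
        exact ((continuous_comp_verticalLine hf.continuousOn hx).measurable.enorm.pow_const 2)
          |>.const_mul 2
    _ ≤ 2 * H2normSq f + 2 * H2normSq g := by
        gcongr <;> exact lintegral_enorm_sq_le_H2normSq _ hx

lemma MemH2.sub (hf : MemH2 f) (hg : MemH2 g) : MemH2 (fun w => f w - g w) := by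
  refine ⟨hf.1.sub hg.1, (H2normSq_sub_le hf.1 g).trans_lt ?_⟩
  exact ENNReal.add_lt_top.mpr
    ⟨ENNReal.mul_lt_top ENNReal.ofNat_lt_top hf.2, ENNReal.mul_lt_top ENNReal.ofNat_lt_top hg.2⟩

lemma MemH2.const_mul (hf : MemH2 f) (c : ℂ) : MemH2 (fun w => c * f w) := by
  refine ⟨hf.1.const_mul c, ?_⟩
  rw [H2normSq_const_mul]
  exact ENNReal.mul_lt_top (by simp) hf.2

lemma lintegral_enorm_inv_add_mul_I_sq {z : ℂ} (hz : z.re ≠ 0) :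
    ∫⁻ y : ℝ, ‖(z + y * I)⁻¹‖ₑ ^ 2 = ENNReal.ofReal (π / |z.re|) := by
  have hlorentz : ∀ y : ℝ, ‖(z + y * I)⁻¹‖ ^ 2
      = (|z.re| ^ 2)⁻¹ * (1 + ((y + z.im) / |z.re|) ^ 2)⁻¹ := fun y => by
    rw [norm_inv, inv_pow, Complex.sq_norm, Complex.normSq_apply, ← mul_inv]
    simp only [add_re, add_im, mul_re, mul_im, ofReal_re, ofReal_im, I_re, I_im]
    congr 1
    field_simp
    rw [sq_abs]
    ring
  have hint : Integrable fun y : ℝ => (|z.re| ^ 2)⁻¹ * (1 + ((y + z.im) / |z.re|) ^ 2)⁻¹ :=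
    ((integrable_inv_one_add_sq.comp_div (abs_ne_zero.mpr hz)).comp_add_right z.im).const_mul _
  calc ∫⁻ y : ℝ, ‖(z + y * I)⁻¹‖ₑ ^ 2
      = ∫⁻ y : ℝ, ENNReal.ofReal ((|z.re| ^ 2)⁻¹ * (1 + ((y + z.im) / |z.re|) ^ 2)⁻¹) := by
        simp only [← hlorentz, ENNReal.ofReal_pow (norm_nonneg _), ofReal_norm]
    _ = ENNReal.ofReal (∫ y : ℝ, (|z.re| ^ 2)⁻¹ * (1 + ((y + z.im) / |z.re|) ^ 2)⁻¹) :=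
        (ofReal_integral_eq_lintegral_ofReal hint (.of_forall fun y => by positivity)).symm
    _ = ENNReal.ofReal (π / |z.re|) := by
        rw [integral_const_mul, integral_add_right_eq_self fun y : ℝ => (1 + (y / |z.re|) ^ 2)⁻¹,
          Measure.integral_comp_div fun y : ℝ => (1 + y ^ 2)⁻¹, integral_univ_inv_one_add_sq,
          abs_abs, smul_eq_mul]
        field_simp

lemma continuous_inv_add_mul_I {z : ℂ} (hz : z.re ≠ 0) : Continuous fun y : ℝ => (z + y * I)⁻¹ :=
  Continuous.inv₀ (by fun_prop) fun y h => hz (by simpa using congrArg re h)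

lemma memLp_inv_add_mul_I {z : ℂ} (hz : z.re ≠ 0) : MemLp (fun y : ℝ => (z + y * I)⁻¹) 2 := by
  rw [memLp_two_iff_lintegral_lt_top (continuous_inv_add_mul_I hz).aestronglyMeasurable,
    lintegral_enorm_inv_add_mul_I_sq hz]
  exact ENNReal.ofReal_lt_top

lemma memH2_inv_add (ha : 0 < a.re) : MemH2 fun w => (w + a)⁻¹ := by
  have hne : ∀ w : ℂ, 0 < w.re → w + a ≠ 0 := fun w hw h => by
    have := congrArg re h
    simp only [add_re, zero_re] at this
    linarith
  refine ⟨fun w hw => ?_, (H2normSq_le_iff (C := ENNReal.ofReal (π / a.re)).mpr fun x hx => ?_)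
    |>.trans_lt ENNReal.ofReal_lt_top⟩
  · have := hne w hw
    fun_prop (disch := assumption)
  · have hre : (x + a).re = x + a.re := by simp
    simp only [add_right_comm (x : ℂ) _ a]
    rw [lintegral_enorm_inv_add_mul_I_sq (by rw [hre]; positivity), hre, abs_of_pos (by positivity)]
    gcongr
    linarith

lemma lintegral_complex {F : ℂ → ℝ≥0∞} (hF : Measurable F) :
    ∫⁻ z, F z = ∫⁻ x : ℝ, ∫⁻ y : ℝ, F (x + y * I) := by
  rw [← Complex.volume_preserving_equiv_real_prod.symm.lintegral_comp_emb
    measurableEquivRealProd.symm.measurableEmbedding, Measure.volume_eq_prod, lintegral_prod]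
  · simp [measurableEquivRealProd_symm_apply, mk_eq_add_mul_I]
  · fun_prop

lemma ofReal_mul_enorm_sq_le_H2normSq (hf : DifferentiableOn ℂ f {w : ℂ | 0 < w.re}) {w : ℂ}
    (hw : 0 < w.re) : ENNReal.ofReal (π * w.re / 2) * ‖f w‖ₑ ^ 2 ≤ H2normSq f := by
  set r := w.re
  have hball : Metric.ball w r ⊆ re ⁻¹' Ioo 0 (2 * r) := fun z hz => by
    have := abs_lt.mp ((abs_re_le_norm (z - w)).trans_lt (mem_ball_iff_norm.mp hz))
    simp only [sub_re] at this
    constructor <;> linarith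
  let F : ℂ → ℝ≥0∞ := (re ⁻¹' Ioo 0 (2 * r)).indicator fun z => ‖f z‖ₑ ^ 2
  have hF : Measurable F := measurable_indicator_of_continuousOn
    (measurableSet_Ioo.preimage measurable_re)
    ((ENNReal.continuous_pow 2).comp_continuousOn (hf.continuousOn.mono fun z hz => hz.1).enorm)
  have harea : ENNReal.ofReal (π * r ^ 2) * ‖f w‖ₑ ^ 2 ≤ ENNReal.ofReal (2 * r) * H2normSq f :=
    calc ENNReal.ofReal (π * r ^ 2) * ‖f w‖ₑ ^ 2
        ≤ ∫⁻ z in Metric.ball w r, ‖f z‖ₑ ^ 2 := by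
          simpa only [Pi.pow_apply, enorm_pow] using ofReal_mul_enorm_le_lintegral_ball hw.le
            ((hf.pow 2).mono fun z hz => (hball hz).1)
      _ ≤ ∫⁻ z, F z := by
          rw [lintegral_indicator (measurableSet_Ioo.preimage measurable_re)]
          exact lintegral_mono_set hball
      _ = ∫⁻ x in Ioo 0 (2 * r), ∫⁻ y : ℝ, ‖f (x + y * I)‖ₑ ^ 2 := by
          rw [lintegral_complex hF, ← lintegral_indicator measurableSet_Ioo]
          refine lintegral_congr fun x => ?_
          by_cases hx : x ∈ Ioo 0 (2 * r) <;> simp [F, indicator, hx]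
      _ ≤ ∫⁻ _ in Ioo 0 (2 * r), H2normSq f :=
          setLIntegral_mono' measurableSet_Ioo fun x hx => lintegral_enorm_sq_le_H2normSq f hx.1
      _ = ENNReal.ofReal (2 * r) * H2normSq f := by simp [mul_comm]
  rw [← ENNReal.mul_le_mul_iff_right (a := ENNReal.ofReal (2 * r)) (by simpa using hw)
      ENNReal.ofReal_ne_top,
    ← mul_assoc, ← ENNReal.ofReal_mul (by positivity)]
  convert harea using 3
  ring

lemma MemH2.exists_norm_le (hf : MemH2 f) {δ : ℝ} (hδ : 0 < δ) :
    ∃ M, ∀ w : ℂ, δ ≤ w.re → ‖f w‖ ≤ M := by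
  have hpos : 0 < ENNReal.ofReal (π * δ / 2) := ENNReal.ofReal_pos.mpr (by positivity)
  have hfin : H2normSq f / ENNReal.ofReal (π * δ / 2) ≠ ⊤ :=
    ENNReal.div_ne_top hf.2.ne hpos.ne'
  refine ⟨√(H2normSq f / ENNReal.ofReal (π * δ / 2)).toReal, fun w hw => ?_⟩
  have hsq : ‖f w‖ₑ ^ 2 ≤ H2normSq f / ENNReal.ofReal (π * δ / 2) := by
    rw [ENNReal.le_div_iff_mul_le (.inl hpos.ne') (.inl ENNReal.ofReal_ne_top), mul_comm]
    refine le_trans ?_ (ofReal_mul_enorm_sq_le_H2normSq hf.1 (hδ.trans_le hw))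
    gcongr
  refine Real.le_sqrt_of_sq_le ?_
  simpa using ENNReal.toReal_mono hfin hsq

end HardySpace

section Laplace

/-- The truncated exponential `t ↦ exp (-p t)` on the positive half-line, extended by zero. -/
noncomputable def decayExp (p : ℂ) : ℝ → ℂ :=
  (Ioi 0).indicator fun t => cexp (-p * t)

/-- The Laplace transform `w ↦ ∫₀^∞ exp (-w t) f(t) dt`; values of `f` on the negative half-line
are ignored. -/
noncomputable def laplace (f : ℝ → ℂ) (w : ℂ) : ℂ :=
  ∫ t, decayExp w t * f t

variable {p q w : ℂ}

lemma decayExp_mul_decayExp (p q : ℂ) (t : ℝ) :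
    decayExp p t * decayExp q t = decayExp (p + q) t := by
  rw [decayExp, decayExp, ← inter_indicator_mul, inter_self, decayExp]
  simp only [← Complex.exp_add, neg_add, add_mul]

lemma conj_decayExp (p : ℂ) (t : ℝ) : conj (decayExp p t) = decayExp (conj p) t := by
  simp only [decayExp, indicator_apply, apply_ite conj, ← Complex.exp_conj, map_mul, map_neg,
    conj_ofReal, map_zero]

lemma norm_decayExp_of_pos (p : ℂ) {t : ℝ} (ht : 0 < t) :
    ‖decayExp p t‖ = Real.exp (-p.re * t) := by
  simp [decayExp, indicator_of_mem (mem_Ioi.mpr ht), Complex.norm_exp]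

lemma decayExp_of_nonpos (p : ℂ) {t : ℝ} (ht : t ≤ 0) : decayExp p t = 0 :=
  indicator_of_notMem (notMem_Ioi.mpr ht) _

lemma norm_decayExp_le_one (hp : 0 ≤ p.re) (t : ℝ) : ‖decayExp p t‖ ≤ 1 := by
  rcases le_or_gt t 0 with ht | ht
  · simp [decayExp_of_nonpos p ht]
  · rw [norm_decayExp_of_pos p ht, Real.exp_le_one_iff]
    exact mul_nonpos_of_nonpos_of_nonneg (neg_nonpos.mpr hp) ht.le

lemma norm_mul_decayExp_le {r : ℝ} (hr : 0 < r) (hp : 2 * r ≤ p.re) (t : ℝ) :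
    ‖t * decayExp p t‖ ≤ r⁻¹ * ‖decayExp r t‖ := by
  rcases le_or_gt t 0 with ht | ht
  · simp [decayExp_of_nonpos _ ht]
  · rw [norm_mul, norm_decayExp_of_pos _ ht, norm_decayExp_of_pos _ ht, norm_real,
      Real.norm_of_nonneg ht.le, ofReal_re]
    calc t * Real.exp (-p.re * t) ≤ r⁻¹ * Real.exp (r * t) * Real.exp (-(2 * r) * t) := by
          gcongr
          rw [le_inv_mul_iff₀ hr]
          linarith [Real.add_one_le_exp (r * t)]
      _ = r⁻¹ * Real.exp (-r * t) := by
          rw [mul_assoc, ← Real.exp_add]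
          ring_nf

lemma measurable_decayExp (p : ℂ) : Measurable (decayExp p) :=
  Measurable.indicator (by fun_prop) measurableSet_Ioi

lemma hasDerivAt_decayExp (w : ℂ) (t : ℝ) :
    HasDerivAt (fun w => decayExp w t) (-t * decayExp w t) w := by
  rcases le_or_gt t 0 with ht | ht
  · simpa only [decayExp_of_nonpos _ ht, mul_zero] using hasDerivAt_const w (0 : ℂ)
  · simp only [decayExp, indicator_of_mem (mem_Ioi.mpr ht)]
    convert! ((hasDerivAt_id w).neg.mul_const (t : ℂ)).cexp using 1
    simp [mul_comm]

lemma integrable_decayExp (hp : 0 < p.re) : Integrable (decayExp p) :=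
  (integrable_indicator_iff measurableSet_Ioi).mpr
    (integrableOn_exp_mul_complex_Ioi (by simpa using hp) 0)

lemma integral_decayExp (hp : 0 < p.re) : ∫ t, decayExp p t = p⁻¹ := by
  rw [decayExp, integral_indicator measurableSet_Ioi,
    integral_exp_mul_complex_Ioi (by simpa using hp)]
  simp [neg_div_neg_eq]

lemma memLp_decayExp (hp : 0 < p.re) : MemLp (decayExp p) 2 := by
  refine (memLp_two_iff_integrable_sq_norm (measurable_decayExp p).aestronglyMeasurable).mpr ?_
  refine (integrable_decayExp (p := p + p) (by simpa using hp)).norm.congr (.of_forall fun t => ?_)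
  simp only [← decayExp_mul_decayExp, norm_mul, sq]

lemma integrable_decayExp_mul {f : ℝ → ℂ} (hf : MemLp f 2) (hw : 0 < w.re) :
    Integrable fun t => decayExp w t * f t :=
  (memLp_decayExp hw).integrable_mul hf

lemma memLp_decayExp_mul {f : ℝ → ℂ} (hf : MemLp f 2) (hw : 0 < w.re) :
    MemLp (fun t => decayExp w t * f t) 2 := by
  refine hf.of_le ((measurable_decayExp w).aestronglyMeasurable.mul hf.1) (.of_forall fun t => ?_)
  rw [norm_mul]
  exact mul_le_of_le_one_left (norm_nonneg _) (norm_decayExp_le_one hw.le t)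

lemma laplace_decayExp (h : 0 < (w + p).re) : laplace (decayExp p) w = (w + p)⁻¹ := by
  simp only [laplace, decayExp_mul_decayExp, integral_decayExp h]

lemma laplace_toLp {f : ℝ → ℂ} (hf : MemLp f 2) (w : ℂ) : laplace (hf.toLp f) w = laplace f w :=
  integral_congr_ae (hf.coeFn_toLp.mono fun t ht => by simp only [ht])

lemma inner_toLp_decayExp (hp : 0 < p.re) (F : Lp ℂ 2 (volume : Measure ℝ)) :
    ⟪(memLp_decayExp hp).toLp _, F⟫_ℂ = laplace F (conj p) := by
  rw [L2.inner_def, laplace]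
  refine integral_congr_ae ?_
  filter_upwards [(memLp_decayExp hp).coeFn_toLp] with t ht
  rw [ht, RCLike.inner_apply, conj_decayExp, mul_comm]

lemma exists_continuousLinearMap_eq_laplace (hw : 0 < w.re) :
    ∃ L : Lp ℂ 2 (volume : Measure ℝ) →L[ℂ] ℂ, ∀ F : Lp ℂ 2 (volume : Measure ℝ),
      L F = laplace F w := by
  have hw' : 0 < (conj w).re := by simpa using hw
  refine ⟨innerSL ℂ ((memLp_decayExp hw').toLp _), fun F => ?_⟩
  rw [innerSL_apply_apply, inner_toLp_decayExp hw', conj_conj]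

lemma fourier_decayExp_mul (f : ℝ → ℂ) (w : ℂ) (s : ℝ) :
    𝓕 (fun t => decayExp w t * f t) s = laplace f (w + (2 * π * s : ℝ) * I) := by
  rw [Real.fourier_eq']
  refine integral_congr_ae (.of_forall fun t => ?_)
  rcases le_or_gt t 0 with ht | ht
  · simp [decayExp_of_nonpos _ ht]
  · simp only [decayExp, indicator_of_mem (mem_Ioi.mpr ht), smul_eq_mul, ← mul_assoc,
      ← Complex.exp_add, RCLike.inner_apply, conj_trivial]
    push_cast
    ring_nf

lemma fourier_decayExp (hp : 0 < p.re) (s : ℝ) :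
    𝓕 (decayExp p) s = (p + (2 * π * s : ℝ) * I)⁻¹ := by
  simpa [laplace, integral_decayExp, hp] using fourier_decayExp_mul 1 p s

lemma differentiableAt_laplace {f : ℝ → ℂ}
    (hf : ∀ p : ℂ, 0 < p.re → Integrable fun t => decayExp p t * f t) (hw : 0 < w.re) :
    DifferentiableAt ℂ (laplace f) w := by
  set r := w.re / 4
  have hr : 0 < r := by positivity
  refine (hasDerivAt_integral_of_dominated_loc_of_deriv_le
    (F' := fun w t => -t * decayExp w t * f t) (bound := fun t => r⁻¹ * ‖decayExp r t * f t‖)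
    (s := {w : ℂ | 2 * r < w.re})
    ((isOpen_re_gt _).mem_nhds (by simp [r]; linarith)) ?_ (hf w hw) ?_ ?_ ?_ ?_).2.differentiableAt
  · filter_upwards [(isOpen_re_gt 0).mem_nhds hw] with z hz using (hf z hz).1
  · simp only [mul_assoc]
    exact (by fun_prop : Continuous fun t : ℝ => -(t : ℂ)).aestronglyMeasurable.mul (hf w hw).1
  · refine .of_forall fun t z hz => ?_
    rw [norm_mul, norm_mul (decayExp _ _), ← mul_assoc, neg_mul, norm_neg]
    gcongr
    exact norm_mul_decayExp_le hr hz.le t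
  · exact (hf r (by simpa using hr)).norm.const_mul _
  · exact .of_forall fun t z _ => (hasDerivAt_decayExp z t).mul_const (f t)

lemma lintegral_enorm_laplace_sq_le {f : ℝ → ℂ} (hf : MemLp f 2) (hw : 0 < w.re) :
    ∫⁻ s : ℝ, ‖laplace f (w + (2 * π * s : ℝ) * I)‖ₑ ^ 2 ≤ ∫⁻ t, ‖f t‖ₑ ^ 2 := by
  simp only [← fourier_decayExp_mul]
  rw [lintegral_enorm_fourier_sq (integrable_decayExp_mul hf hw) (memLp_decayExp_mul hf hw)]
  gcongr with t
  rw [enorm_mul]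
  exact mul_le_of_le_one_left'
    (by simpa using ENNReal.ofReal_le_ofReal (norm_decayExp_le_one hw.le t))

lemma lintegral_eq_ofReal_mul_lintegral_comp_mul_left (g : ℝ → ℝ≥0∞) {r : ℝ} (hr : 0 < r) :
    ∫⁻ y, g y = ENNReal.ofReal r * ∫⁻ s, g (r * s) := by
  conv_lhs => rw [← Real.smul_map_volume_mul_left hr.ne', abs_of_pos hr]
  rw [lintegral_smul_measure, smul_eq_mul, (measurableEmbedding_mulLeft₀ hr.ne').lintegral_map]

lemma H2normSq_laplace_le {f : ℝ → ℂ} (hf : MemLp f 2) :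
    H2normSq (laplace f) ≤ ENNReal.ofReal (2 * π) * ∫⁻ t, ‖f t‖ₑ ^ 2 := by
  refine H2normSq_le_iff.mpr fun x hx => ?_
  rw [lintegral_eq_ofReal_mul_lintegral_comp_mul_left _ Real.two_pi_pos]
  gcongr ENNReal.ofReal (2 * π) * ?_
  exact lintegral_enorm_laplace_sq_le (w := x) hf (by simpa using hx)

lemma memH2_laplace {f : ℝ → ℂ} (hf : MemLp f 2) : MemH2 (laplace f) := by
  refine ⟨fun w hw => (differentiableAt_laplace (fun p hp => integrable_decayExp_mul hf hp)
    hw).differentiableWithinAt, (H2normSq_laplace_le hf).trans_lt ?_⟩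
  rw [← enorm_toLp_sq hf]
  exact ENNReal.mul_lt_top ENNReal.ofReal_lt_top (ENNReal.pow_lt_top enorm_lt_top)

end Laplace

section Cauchy

variable {E : Type*} [NormedAddCommGroup E] [NormedSpace ℂ E]

lemma integral_verticalLine_eq_of_tendstoUniformlyOn {q : ℂ → E} {x₁ x₂ : ℝ}
    (hq : DifferentiableOn ℂ q (re ⁻¹' uIcc x₁ x₂))
    (hlim : TendstoUniformlyOn (fun y x : ℝ => q (x + y * I)) 0 (cocompact ℝ) (uIcc x₁ x₂))
    (h₁ : Integrable fun y : ℝ => q (x₁ + y * I)) (h₂ : Integrable fun y : ℝ => q (x₂ + y * I)) :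
    ∫ y : ℝ, q (x₁ + y * I) = ∫ y : ℝ, q (x₂ + y * I) := by
  have hvert : ∀ {x : ℝ}, Integrable (fun y : ℝ => q (x + y * I)) →
      Tendsto (fun T : ℝ => ∫ y in -T..T, q (x + y * I)) atTop (𝓝 (∫ y : ℝ, q (x + y * I))) :=
    fun h => intervalIntegral_tendsto_integral h tendsto_neg_atTop_atBot tendsto_id
  have hhoriz : Tendsto (fun T : ℝ => ∫ x in x₁..x₂, q (x + T * I)) (cocompact ℝ) (𝓝 0) := by
    have hcont : ∀ T : ℝ, ContinuousOn (fun x : ℝ => q (x + T * I)) (uIcc x₁ x₂) := fun T =>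
      hq.continuousOn.comp (by fun_prop) fun x hx => by simpa using hx
    rw [cocompact_eq_atBot_atTop] at hlim ⊢
    simpa using hlim.tendsto_intervalIntegral_of_continuousOn (.of_forall hcont)
  have hrect : ∀ T : ℝ, (∫ x in x₁..x₂, q (x + T * I)) - (∫ x in x₁..x₂, q (x + (-T : ℝ) * I)) =
      I • ((∫ y in -T..T, q (x₂ + y * I)) - ∫ y in -T..T, q (x₁ + y * I)) := fun T => by
    have h := integral_boundary_rect_eq_zero_of_differentiableOn q (x₁ + (-T : ℝ) * I) (x₂ + T * I)
      (hq.mono fun z hz => by simpa using hz.1)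
    simp only [add_re, add_im, mul_re, mul_im, ofReal_re, ofReal_im, I_re, I_im, mul_zero, mul_one,
      sub_zero, add_zero, zero_add] at h
    rw [smul_sub, eq_comm, ← sub_eq_zero, ← h]
    abel
  have h0 := (hhoriz.mono_left atTop_le_cocompact).sub
    ((hhoriz.mono_left atBot_le_cocompact).comp tendsto_neg_atTop_atBot)
  have h := tendsto_nhds_unique h0 ((((hvert h₂).sub (hvert h₁)).const_smul I).congr fun T =>
    (hrect T).symm)
  rw [sub_self, eq_comm, smul_eq_zero_iff_right I_ne_zero, sub_eq_zero] at h
  exact h.symm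

variable {q : ℂ → ℂ} {a : ℂ} {x : ℝ}

lemma eLpNorm_one_verticalLine_sq_le (hq : DifferentiableOn ℂ q {w : ℂ | 0 < w.re}) (hx : 0 < x)
    (hxa : x ≠ a.re) :
    eLpNorm (fun y : ℝ => q (x + y * I)) 1 ^ 2 ≤
      ENNReal.ofReal (π / |x - a.re|) * H2normSq fun w => (w - a) * q w := by
  have hre : ((x : ℂ) - a).re = x - a.re := by simp
  have hre_ne : ((x : ℂ) - a).re ≠ 0 := by rwa [hre, sub_ne_zero]
  have hne : ∀ y : ℝ, (x - a + y * I : ℂ) ≠ 0 := fun y h =>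
    hre_ne (by simpa using congrArg re h)
  have hq_eq : (fun y : ℝ => q (x + y * I)) =
      (fun y : ℝ => (x - a + y * I)⁻¹) • fun y : ℝ => (x + y * I - a) * q (x + y * I) := by
    ext y
    rw [Pi.smul_apply', smul_eq_mul, add_sub_right_comm, inv_mul_cancel_left₀ (hne y)]
  have hline : Continuous fun y : ℝ => (x + y * I - a) * q (x + y * I) :=
    (by fun_prop : Continuous fun y : ℝ => x + y * I - a).mul
      (continuous_comp_verticalLine hq.continuousOn hx)
  have hCS := eLpNorm_smul_le_mul_eLpNorm (p := 2) (q := 2) (r := 1) (μ := volume)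
    hline.aestronglyMeasurable (memLp_inv_add_mul_I hre_ne).1
  rw [← hq_eq] at hCS
  refine (pow_le_pow_left' hCS 2).trans ?_
  rw [mul_pow, eLpNorm_two_sq, eLpNorm_two_sq, lintegral_enorm_inv_add_mul_I_sq hre_ne, hre]
  gcongr
  exact lintegral_enorm_sq_le_H2normSq (fun w => (w - a) * q w) hx

lemma integrable_verticalLine (hq : DifferentiableOn ℂ q {w : ℂ | 0 < w.re})
    (hH2 : MemH2 fun w => (w - a) * q w) (hx : 0 < x) (hxa : x ≠ a.re) :
    Integrable fun y : ℝ => q (x + y * I) := by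
  have h := (eLpNorm_one_verticalLine_sq_le hq hx hxa).trans_lt
    (ENNReal.mul_lt_top ENNReal.ofReal_lt_top hH2.2)
  refine memLp_one_iff_integrable.mp
    ⟨(continuous_comp_verticalLine hq.continuousOn hx).aestronglyMeasurable, ?_⟩
  exact (ENNReal.pow_lt_top_iff.mp h).resolve_right two_ne_zero

lemma tendstoUniformlyOn_horizontal {x₁ x₂ : ℝ} (hH2 : MemH2 fun w => (w - a) * q w) (hx₁ : 0 < x₁)
    (hx₂ : 0 < x₂) :
    TendstoUniformlyOn (fun y x : ℝ => q (x + y * I)) 0 (cocompact ℝ) (uIcc x₁ x₂) := by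
  obtain ⟨M, hM⟩ := hH2.exists_norm_le (lt_min hx₁ hx₂)
  have hdecay : Tendsto (fun y : ℝ => M / |y - a.im|) (cocompact ℝ) (𝓝 0) := by
    have : Tendsto (fun y : ℝ => |y - a.im|) (cocompact ℝ) atTop :=
      tendsto_norm_cocompact_atTop.comp
        (Homeomorph.subRight a.im).isClosedEmbedding.tendsto_cocompact
    exact this.const_div_atTop M
  rw [Metric.tendstoUniformlyOn_iff]
  intro ε hε
  filter_upwards [hdecay.eventually_lt_const hε, isCompact_singleton.compl_mem_cocompact]
    with y hy (hya : y ≠ a.im) x hx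
  have hya_pos : 0 < |y - a.im| := abs_pos.mpr (sub_ne_zero.mpr hya)
  refine lt_of_le_of_lt ?_ hy
  rw [Pi.zero_apply, dist_zero_left, le_div_iff₀' hya_pos]
  calc |y - a.im| * ‖q (x + y * I)‖ ≤ ‖x + y * I - a‖ * ‖q (x + y * I)‖ := by
        gcongr
        simpa using abs_im_le_norm (x + y * I - a)
    _ = ‖(x + y * I - a) * q (x + y * I)‖ := (norm_mul _ _).symm
    _ ≤ M := hM _ (by simpa using (show min x₁ x₂ ≤ x from hx.1))

lemma integral_verticalLine_eq_zero (hq : DifferentiableOn ℂ q {w : ℂ | 0 < w.re})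
    (hH2 : MemH2 fun w => (w - a) * q w) (hx : 0 < x) (hxa : x ≠ a.re) :
    ∫ y : ℝ, q (x + y * I) = 0 := by
  have hshift : ∀ᶠ X : ℝ in atTop, ‖∫ y : ℝ, q (x + y * I)‖ₑ ^ 2 ≤
      ENNReal.ofReal (π / |X - a.re|) * H2normSq fun w => (w - a) * q w := by
    filter_upwards [eventually_gt_atTop 0, eventually_ne_atTop a.re] with X hX hXa
    have hX_eq : ∫ y : ℝ, q (x + y * I) = ∫ y : ℝ, q (X + y * I) :=
      integral_verticalLine_eq_of_tendstoUniformlyOn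
        (hq.mono fun w hw => (lt_min hx hX).trans_le hw.1)
        (tendstoUniformlyOn_horizontal hH2 hx hX) (integrable_verticalLine hq hH2 hx hxa)
        (integrable_verticalLine hq hH2 hX hXa)
    rw [hX_eq]
    refine le_trans ?_ (eLpNorm_one_verticalLine_sq_le hq hX hXa)
    rw [eLpNorm_one_eq_lintegral_enorm]
    gcongr
    exact enorm_integral_le_lintegral_enorm _
  have hdecay : Tendsto (fun X : ℝ => ENNReal.ofReal (π / |X - a.re|)) atTop (𝓝 0) := by
    have habs : Tendsto (fun X : ℝ => |X - a.re|) atTop atTop :=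
      tendsto_abs_atTop_atTop.comp (tendsto_atTop_add_const_right _ _ tendsto_id)
    simpa [Function.comp_def] using
      (ENNReal.continuous_ofReal.tendsto 0).comp (habs.const_div_atTop π)
  have hlim := ENNReal.Tendsto.mul_const hdecay (.inr hH2.2.ne)
  rw [zero_mul] at hlim
  simpa using ge_of_tendsto hlim hshift

end Cauchy

section PaleyWiener

variable {g : ℂ → ℂ} {p w : ℂ} {x : ℝ}

lemma laplace_eq_integral_fourier (hw : 0 < w.re) (F : Lp ℂ 2 (volume : Measure ℝ)) :
    laplace F w = ∫ s : ℝ, (w - (2 * π * s : ℝ) * I)⁻¹ * (𝓕 F : Lp ℂ 2 (volume : Measure ℝ)) s := by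
  have hw' : 0 < (conj w).re := by simpa using hw
  rw [← congrArg (laplace F) (conj_conj w), ← inner_toLp_decayExp hw' F, ← Lp.inner_fourier_eq,
    L2.inner_def]
  refine integral_congr_ae ?_
  filter_upwards [fourier_toLp_ae_eq (integrable_decayExp hw') (memLp_decayExp hw')] with s hs
  rw [hs, fourier_decayExp hw', RCLike.inner_apply, mul_comm, map_inv₀, map_add, map_mul,
    conj_conj, conj_ofReal, conj_I, mul_neg, sub_eq_add_neg]

lemma integral_comp_two_pi_mul (h : ℝ → ℂ) :
    ∫ s : ℝ, h (2 * π * s) = (2 * π : ℂ)⁻¹ * ∫ y, h y := by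
  rw [Measure.integral_comp_mul_left, abs_of_pos (by positivity), Complex.real_smul]
  simp

lemma integrable_inv_sub_mul_inv_add (hw : w.re ≠ 0) (hp : p.re ≠ 0) :
    Integrable fun y : ℝ => (w - y * I)⁻¹ * (p + y * I)⁻¹ := by
  refine ((memLp_inv_add_mul_I (z := -w) (by simpa using hw)).neg.integrable_mul
    (memLp_inv_add_mul_I hp)).congr (.of_forall fun y => ?_)
  simp only [Pi.mul_apply, Pi.neg_apply, ← inv_neg, neg_add, neg_neg, sub_eq_add_neg]

lemma integral_inv_sub_mul_inv_add (hw : 0 < w.re) (hp : 0 < p.re) :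
    (2 * π : ℂ)⁻¹ * ∫ y : ℝ, (w - y * I)⁻¹ * (p + y * I)⁻¹ = (w + p)⁻¹ := by
  have hwp : 0 < (w + p).re := by simpa using add_pos hw hp
  calc (2 * π : ℂ)⁻¹ * ∫ y : ℝ, (w - y * I)⁻¹ * (p + y * I)⁻¹
      = ∫ s : ℝ, (w - (2 * π * s : ℝ) * I)⁻¹ * (p + (2 * π * s : ℝ) * I)⁻¹ :=
        (integral_comp_two_pi_mul fun y => (w - y * I)⁻¹ * (p + y * I)⁻¹).symm
    _ = laplace ((memLp_decayExp hp).toLp _) w := by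
        rw [laplace_eq_integral_fourier hw]
        refine integral_congr_ae ?_
        filter_upwards [fourier_toLp_ae_eq (integrable_decayExp hp) (memLp_decayExp hp)] with s hs
        rw [hs, fourier_decayExp hp]
    _ = (w + p)⁻¹ := by rw [laplace_toLp, laplace_decayExp hwp]

lemma MemH2.exists_eq_sub_mul_add (hg : MemH2 g) {a : ℂ} (ha : 0 < a.re) :
    ∃ q : ℂ → ℂ, DifferentiableOn ℂ q {w : ℂ | 0 < w.re} ∧ MemH2 (fun w => (w - a) * q w) ∧
      ∀ w, g w = (w - a) * q w + g a * (a + conj a) * (w + conj a)⁻¹ := by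
  let f : ℂ → ℂ := fun w => g w - g a * (a + conj a) * (w + conj a)⁻¹
  have hf : MemH2 f := hg.sub ((memH2_inv_add (by simpa using ha)).const_mul _)
  have haa : a + conj a ≠ 0 := by
    rw [add_conj]
    exact_mod_cast (mul_pos two_pos ha).ne'
  have hfa : f a = 0 := by simp [f, haa]
  have hdslope : ∀ w, (w - a) * dslope f a w = f w := fun w => by
    simpa [hfa] using sub_smul_dslope f a w
  refine ⟨dslope f a, ?_, ?_, fun w => ?_⟩
  · exact (Complex.differentiableOn_dslope ((isOpen_re_gt 0).mem_nhds ha)).mpr hf.1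
  · simpa only [hdslope] using hf
  · rw [hdslope, sub_add_cancel]

lemma MemH2.cauchy_formula (hg : MemH2 g) (hx : 0 < x) (hw : 0 < w.re) :
    (2 * π : ℂ)⁻¹ * ∫ y : ℝ, (w - y * I)⁻¹ * g (x + y * I) = g (w + x) := by
  set a := w + x with ha_def
  have ha : 0 < a.re := by simpa [a] using add_pos hw hx
  have hp : 0 < (x + conj a).re := by simpa using add_pos hx ha
  have hxa : x ≠ a.re := by simpa [a] using hw.ne'
  have hwa : w + (x + conj a) ≠ 0 := fun h => by
    have := congrArg re h
    simp only [add_re, zero_re] at this hp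
    linarith
  obtain ⟨q, hq, hH2, hgq⟩ := hg.exists_eq_sub_mul_add ha
  have hsplit : ∀ y : ℝ, (w - y * I)⁻¹ * g (x + y * I) =
      -q (x + y * I) + g a * (a + conj a) * ((w - y * I)⁻¹ * (x + conj a + y * I)⁻¹) := fun y => by
    have hne : w - y * I ≠ 0 := fun h => hw.ne' (by simpa using congrArg re h)
    rw [hgq, show (x + y * I - a : ℂ) = -(w - y * I) by rw [ha_def]; ring, neg_mul, mul_add,
      mul_neg, inv_mul_cancel_left₀ hne, add_right_comm (x : ℂ),
      mul_left_comm]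
  have hq_int : Integrable fun y : ℝ => -q (x + y * I) :=
    (integrable_verticalLine hq hH2 hx hxa).neg
  simp only [hsplit]
  rw [integral_add hq_int
      ((integrable_inv_sub_mul_inv_add hw.ne' hp.ne').const_mul _),
    integral_neg, integral_verticalLine_eq_zero hq hH2 hx hxa, neg_zero, zero_add,
    integral_const_mul, mul_left_comm, integral_inv_sub_mul_inv_add hw hp, ← add_assoc, ← ha_def,
    mul_assoc, mul_inv_cancel₀, mul_one]
  rwa [← add_assoc, ← ha_def] at hwa

lemma lintegral_enorm_sq_comp_two_pi_mul_le (g : ℂ → ℂ) (hx : 0 < x) :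
    ∫⁻ s : ℝ, ‖g (x + (2 * π * s : ℝ) * I)‖ₑ ^ 2 ≤ H2normSq g := by
  refine le_trans ?_ (lintegral_enorm_sq_le_H2normSq g hx)
  rw [lintegral_eq_ofReal_mul_lintegral_comp_mul_left (fun y : ℝ => ‖g (x + y * I)‖ₑ ^ 2)
    Real.two_pi_pos]
  exact le_mul_of_one_le_left zero_le
    (ENNReal.one_le_ofReal.mpr (by linarith [Real.pi_gt_three] : (1 : ℝ) ≤ 2 * π))

lemma MemH2.exists_laplace_eq_comp_add (hg : MemH2 g) (hx : 0 < x) :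
    ∃ F : Lp ℂ 2 (volume : Measure ℝ), ‖F‖ₑ ^ 2 ≤ H2normSq g ∧
      ∀ w : ℂ, 0 < w.re → laplace F w = g (w + x) := by
  have hbound := lintegral_enorm_sq_comp_two_pi_mul_le g hx
  have hG : MemLp (fun s : ℝ => g (x + (2 * π * s : ℝ) * I)) 2 := by
    refine (memLp_two_iff_lintegral_lt_top ?_).mpr (hbound.trans_lt hg.2)
    exact ((continuous_comp_verticalLine hg.1.continuousOn hx).comp
      (continuous_const_mul (2 * π))).aestronglyMeasurable
  refine ⟨𝓕⁻ (hG.toLp _), ?_, fun w hw => ?_⟩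
  · rwa [← ofReal_norm, ← Lp.norm_fourier_eq, FourierTransform.fourier_fourierInv_eq, ofReal_norm,
      enorm_toLp_sq]
  · rw [laplace_eq_integral_fourier hw, FourierTransform.fourier_fourierInv_eq,
      ← hg.cauchy_formula hx hw, ← integral_comp_two_pi_mul fun y => (w - y * I)⁻¹ * g (x + y * I)]
    refine integral_congr_ae ?_
    filter_upwards [hG.coeFn_toLp] with s hs using by rw [hs]

theorem MemH2.exists_laplace_eq (hg : MemH2 g) :
    ∃ F : Lp ℂ 2 (volume : Measure ℝ), EqOn (laplace F) g {w : ℂ | 0 < w.re} := by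
  have hx : ∀ n : ℕ, 0 < 1 / ((n : ℝ) + 1) := fun n => by positivity
  choose F hF hlaplace using fun n : ℕ => hg.exists_laplace_eq_comp_add (hx n)
  have hconj : ∀ w : {w : ℂ // 0 < w.re}, 0 < (conj w.1).re := fun w => by simpa using w.2
  let e : {w : ℂ // 0 < w.re} → Lp ℂ 2 (volume : Measure ℝ) := fun w =>
    (memLp_decayExp (hconj w)).toLp _
  have he : ∀ w F, ⟪e w, F⟫_ℂ = laplace F w := fun w F => by
    rw [inner_toLp_decayExp (hconj w), conj_conj]
  have hnorm : ∀ n, ‖F n‖ ≤ √(H2normSq g).toReal := fun n => by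
    refine Real.le_sqrt_of_sq_le ?_
    simpa using ENNReal.toReal_mono hg.2.ne (hF n)
  have hlim : ∀ w, Tendsto (fun n => ⟪e w, F n⟫_ℂ) atTop (𝓝 (g w)) := fun w => by
    have hadd : Tendsto (fun n : ℕ => (w : ℂ) + (1 / ((n : ℝ) + 1) : ℝ)) atTop (𝓝 w) := by
      simpa using (tendsto_one_div_add_atTop_nhds_zero_nat (𝕜 := ℝ)).ofReal.const_add (w : ℂ)
    simpa only [he, hlaplace _ _ w.2, Function.comp_def] using
      ((hg.1.differentiableAt ((isOpen_re_gt 0).mem_nhds w.2)).continuousAt.tendsto).comp hadd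
  obtain ⟨F₀, hF₀⟩ := exists_forall_inner_eq_of_tendsto hnorm hlim
  exact ⟨F₀, fun w hw => (he ⟨w, hw⟩ F₀).symm.trans (hF₀ ⟨w, hw⟩)⟩

end PaleyWiener

section Blaschke

/-- The Blaschke factor of the right half-plane with zero `a`: the conformal map of the half-plane
onto the unit disc that sends `a` to `0`. -/
noncomputable def blaschkeFactor (a w : ℂ) : ℂ :=
  (w - a) / (w + conj a)

/-- The inverse of the conformal map `blaschkeFactor a`, from the unit disc to the right
half-plane. -/
noncomputable def blaschkeInv (a z : ℂ) : ℂ :=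
  (a + conj a * z) / (1 - z)

variable {a w z : ℂ}

lemma add_conj_ne_zero (hw : 0 < w.re) (ha : 0 < a.re) : w + conj a ≠ 0 := fun h =>
  (add_pos hw ha).ne' (by simpa using congrArg re h)

lemma norm_blaschkeFactor_sq (h : w + conj a ≠ 0) :
    ‖blaschkeFactor a w‖ ^ 2 = 1 - 4 * w.re * a.re / ‖w + conj a‖ ^ 2 := by
  have : 0 < ‖w + conj a‖ := norm_pos_iff.mpr h
  rw [blaschkeFactor, norm_div, div_pow, eq_sub_iff_add_eq, ← add_div,
    div_eq_one_iff_eq (by positivity), Complex.sq_norm, Complex.sq_norm, normSq_apply, normSq_apply]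
  simp only [sub_re, sub_im, add_re, add_im, conj_re, conj_im]
  ring

lemma norm_blaschkeFactor_lt_one (ha : 0 < a.re) (hw : 0 < w.re) : ‖blaschkeFactor a w‖ < 1 := by
  have hne := add_conj_ne_zero hw ha
  rw [← sq_lt_one_iff₀ (norm_nonneg _), norm_blaschkeFactor_sq hne]
  have := norm_pos_iff.mpr hne
  exact sub_lt_self _ (by positivity)

lemma differentiableOn_blaschkeFactor (ha : 0 < a.re) :
    DifferentiableOn ℂ (blaschkeFactor a) {w : ℂ | 0 < w.re} :=
  (differentiableOn_id.sub_const _).div (differentiableOn_id.add_const _)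
    fun _ hw => add_conj_ne_zero hw ha

lemma blaschkeInv_re_pos (ha : 0 < a.re) (hz : ‖z‖ < 1) : 0 < (blaschkeInv a z).re := by
  have hz1 : 0 < normSq (1 - z) := normSq_pos.mpr (sub_ne_zero.mpr fun h => by simp [← h] at hz)
  have hz2 : 0 < 1 - normSq z := by
    rw [← Complex.sq_norm, sub_pos]
    exact pow_lt_one₀ (norm_nonneg z) hz two_ne_zero
  have hre : (blaschkeInv a z).re = a.re * (1 - normSq z) / normSq (1 - z) := by
    rw [blaschkeInv, div_re, ← add_div]
    congr 1
    simp only [normSq_apply, add_re, add_im, sub_re, sub_im, mul_re, mul_im, conj_re, conj_im,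
      one_re, one_im]
    ring
  rw [hre]
  positivity

lemma differentiableOn_blaschkeInv (a : ℂ) : DifferentiableOn ℂ (blaschkeInv a) (Metric.ball 0 1) :=
  ((differentiableOn_id.const_mul _).const_add _).div (differentiableOn_id.const_sub _)
    fun z hz => sub_ne_zero.mpr fun h => by simp [← h] at hz

lemma blaschkeInv_blaschkeFactor (ha : 0 < a.re) (hw : 0 < w.re) :
    blaschkeInv a (blaschkeFactor a w) = w := by
  have hne := add_conj_ne_zero hw ha
  have haa := add_conj_ne_zero ha ha
  have hden : 1 - blaschkeFactor a w = (a + conj a) / (w + conj a) := by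
    rw [blaschkeFactor, eq_div_iff hne, sub_mul, div_mul_cancel₀ _ hne]
    ring
  rw [blaschkeInv, hden, blaschkeFactor]
  field_simp
  ring

variable {E : Type*} [NormedAddCommGroup E] [NormedSpace ℂ E] [CompleteSpace E] {G : ℂ → E} {M : ℝ}

-- The Schwarz lemma, transported to the half-plane.
lemma exists_eq_blaschkeFactor_smul (hG : DifferentiableOn ℂ G {w : ℂ | 0 < w.re})
    (hM : ∀ w : ℂ, 0 < w.re → ‖G w‖ ≤ M) (ha : 0 < a.re) (hGa : G a = 0) :
    ∃ G₁ : ℂ → E, DifferentiableOn ℂ G₁ {w : ℂ | 0 < w.re} ∧ (∀ w : ℂ, 0 < w.re → ‖G₁ w‖ ≤ M) ∧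
      ∀ w : ℂ, 0 < w.re → G w = blaschkeFactor a w • G₁ w := by
  let H : ℂ → E := G ∘ blaschkeInv a
  have hdisc : MapsTo (blaschkeFactor a) {w : ℂ | 0 < w.re} (Metric.ball 0 1) := fun w hw =>
    mem_ball_zero_iff.mpr (norm_blaschkeFactor_lt_one ha hw)
  have hplane : MapsTo (blaschkeInv a) (Metric.ball 0 1) {w : ℂ | 0 < w.re} := fun z hz =>
    blaschkeInv_re_pos ha (mem_ball_zero_iff.mp hz)
  have hH : DifferentiableOn ℂ H (Metric.ball 0 1) :=
    hG.comp (differentiableOn_blaschkeInv a) hplane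
  have hH0 : H 0 = 0 := by simp [H, blaschkeInv, hGa]
  refine ⟨dslope H 0 ∘ blaschkeFactor a, ?_, fun w hw => ?_, fun w hw => ?_⟩
  · exact ((Complex.differentiableOn_dslope (Metric.ball_mem_nhds _ one_pos)).mpr hH).comp
      (differentiableOn_blaschkeFactor ha) hdisc
  · have hHM : MapsTo H (Metric.ball 0 1) (Metric.closedBall (H 0) M) := fun z hz => by
      rw [hH0, mem_closedBall_zero_iff]
      exact hM _ (hplane hz)
    simpa using Complex.norm_dslope_le_div_of_mapsTo_ball hH hHM (hdisc hw)
  · have := sub_smul_dslope H 0 (blaschkeFactor a w)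
    rw [hH0, sub_zero, sub_zero] at this
    rw [Function.comp_apply, this]
    simp only [H, Function.comp_apply, blaschkeInv_blaschkeFactor ha hw]

lemma norm_le_mul_prod_norm_blaschkeFactor (hG : DifferentiableOn ℂ G {w : ℂ | 0 < w.re})
    (hM : ∀ w : ℂ, 0 < w.re → ‖G w‖ ≤ M) {s : Finset ℂ} (hs : ∀ a ∈ s, 0 < a.re ∧ G a = 0)
    (hw : 0 < w.re) : ‖G w‖ ≤ M * ∏ a ∈ s, ‖blaschkeFactor a w‖ := by
  induction s using Finset.induction_on generalizing G with
  | empty => simpa using hM w hw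
  | insert a s has ih =>
    rw [Finset.forall_mem_insert] at hs
    obtain ⟨⟨ha, hGa⟩, hs⟩ := hs
    obtain ⟨G₁, hG₁, hM₁, hGG₁⟩ := exists_eq_blaschkeFactor_smul hG hM ha hGa
    have hs₁ : ∀ c ∈ s, 0 < c.re ∧ G₁ c = 0 := fun c hc => by
      refine ⟨(hs c hc).1, (smul_eq_zero.mp ((hGG₁ c (hs c hc).1).symm.trans (hs c hc).2))
        |>.resolve_left ?_⟩
      exact div_ne_zero (sub_ne_zero.mpr fun h => has (h ▸ hc)) (add_conj_ne_zero (hs c hc).1 ha)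
    rw [hGG₁ w hw, norm_smul, Finset.prod_insert has, mul_left_comm]
    gcongr
    exact ih hG₁ hM₁ hs₁

lemma norm_blaschkeFactor_le_exp (ha : 0 < a.re) (hw : 0 < w.re) :
    ‖blaschkeFactor a w‖ ≤
      Real.exp (-(2 * w.re / (1 + ‖w‖) ^ 2 * (a.re / (1 + ‖a‖) ^ 2))) := by
  set η := 2 * w.re / (1 + ‖w‖) ^ 2 * (a.re / (1 + ‖a‖) ^ 2)
  have hne := add_conj_ne_zero hw ha
  have hnorm : ‖w + conj a‖ ≤ (1 + ‖w‖) * (1 + ‖a‖) := by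
    have := norm_add_le w (conj a)
    rw [RCLike.norm_conj] at this
    nlinarith [norm_nonneg w, norm_nonneg a]
  have hη : 2 * η ≤ 4 * w.re * a.re / ‖w + conj a‖ ^ 2 :=
    calc 2 * η = 4 * w.re * a.re / ((1 + ‖w‖) * (1 + ‖a‖)) ^ 2 := by
          simp only [η]
          field_simp
          ring
      _ ≤ 4 * w.re * a.re / ‖w + conj a‖ ^ 2 := by
          have := norm_pos_iff.mpr hne
          gcongr
  refine (pow_le_pow_iff_left₀ (norm_nonneg _) (Real.exp_pos _).le two_ne_zero).mp ?_
  calc ‖blaschkeFactor a w‖ ^ 2 ≤ -(2 * η) + 1 := by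
        rw [norm_blaschkeFactor_sq hne]
        linarith
    _ ≤ Real.exp (-(2 * η)) := Real.add_one_le_exp _
    _ = Real.exp (-η) ^ 2 := by
        rw [← Real.exp_nat_mul]
        ring_nf

theorem summable_zeros_of_bounded (hG : DifferentiableOn ℂ G {w : ℂ | 0 < w.re})
    (hM : ∀ w : ℂ, 0 < w.re → ‖G w‖ ≤ M) (hw : 0 < w.re) (hGw : G w ≠ 0) {ι : Type*} {a : ι → ℂ}
    (ha : ∀ i, 0 < (a i).re) (hinj : Function.Injective a) (hGa : ∀ i, G (a i) = 0) :
    Summable fun i => (a i).re / (1 + ‖a i‖) ^ 2 := by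
  set η := 2 * w.re / (1 + ‖w‖) ^ 2
  have hη : 0 < η := by positivity
  have hGw : 0 < ‖G w‖ := norm_pos_iff.mpr hGw
  have hM0 : 0 < M := hGw.trans_le (hM w hw)
  refine summable_of_sum_le (c := Real.log (M / ‖G w‖) / η)
    (fun i => div_nonneg (ha i).le (sq_nonneg _)) fun s => ?_
  rw [le_div_iff₀' hη, Real.le_log_iff_exp_le (by positivity), le_div_iff₀ hGw,
    ← le_div_iff₀' (Real.exp_pos _), div_eq_mul_inv, ← Real.exp_neg]
  calc ‖G w‖ ≤ M * ∏ c ∈ s.map ⟨a, hinj⟩, ‖blaschkeFactor c w‖ :=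
        norm_le_mul_prod_norm_blaschkeFactor hG hM
          (by simpa using fun i _ => ⟨ha i, hGa i⟩) hw
    _ = M * ∏ i ∈ s, ‖blaschkeFactor (a i) w‖ := by rw [Finset.prod_map]; rfl
    _ ≤ M * ∏ i ∈ s, Real.exp (-(η * ((a i).re / (1 + ‖a i‖) ^ 2))) := by
        gcongr with i
        exact norm_blaschkeFactor_le_exp (ha i) hw
    _ = M * Real.exp (-(η * ∑ i ∈ s, (a i).re / (1 + ‖a i‖) ^ 2)) := by
        rw [← Real.exp_sum, Finset.sum_neg_distrib, Finset.mul_sum]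

end Blaschke

section Zeros

variable {ι : Type*} {a : ι → ℂ} {f : ℂ → ℂ} {δ : ℝ}

theorem MemH2.eqOn_zero_of_not_summable (hf : MemH2 f) (hδ : 0 < δ) (ha : ∀ i, δ ≤ (a i).re)
    (hinj : Function.Injective a) (hns : ¬ Summable fun i => (a i).re / (1 + ‖a i‖) ^ 2)
    (hfa : ∀ i, f (a i) = 0) : EqOn f 0 {w : ℂ | 0 < w.re} := by
  intro w (hw : 0 < w.re)
  by_contra hfw
  refine hns ?_
  -- `f` is bounded only away from the imaginary axis, so it is first translated.
  set η := min δ w.re / 2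
  have hη : 0 < η := half_pos (lt_min hδ hw)
  have hηδ : 2 * η ≤ δ := by simp [η, mul_div_cancel₀]
  have hηw : 2 * η ≤ w.re := by simp [η, mul_div_cancel₀]
  obtain ⟨M, hM⟩ := hf.exists_norm_le hη
  have hsum : Summable fun i => (a i - η).re / (1 + ‖a i - η‖) ^ 2 := by
    refine summable_zeros_of_bounded (G := fun z => f (z + η)) (M := M) (w := w - η) ?_
      (fun z hz => hM _ (by simpa using hz.le)) ?_ (by simpa using hfw) (fun i => ?_)
      (fun i j hij => hinj (sub_left_injective hij)) (by simpa using hfa)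
    · exact hf.1.comp (by fun_prop) fun z hz => by simpa using add_pos hz hη
    · rw [sub_re, ofReal_re]
      linarith
    · rw [sub_re, ofReal_re]
      linarith [ha i]
  refine Summable.of_nonneg_of_le (fun i => ?_) (fun i => ?_) (hsum.mul_left 8)
  · exact div_nonneg (hδ.le.trans (ha i)) (sq_nonneg _)
  · have hre : (a i).re ≤ 2 * (a i - η).re := by
      rw [sub_re, ofReal_re]
      linarith [ha i]
    have hnorm : 1 + ‖a i - η‖ ≤ 2 * (1 + ‖a i‖) := by
      have := norm_sub_le (a i) η
      rw [norm_real, Real.norm_of_nonneg hη.le] at this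
      linarith [ha i, re_le_norm (a i)]
    calc (a i).re / (1 + ‖a i‖) ^ 2 = 4 * ((a i).re / (2 * (1 + ‖a i‖)) ^ 2) := by
          field_simp
          ring
      _ ≤ 4 * (2 * (a i - η).re / (1 + ‖a i - η‖) ^ 2) := by
          have := hδ.trans_le (ha i)
          gcongr
          exact this.le.trans hre
      _ = 8 * ((a i - η).re / (1 + ‖a i - η‖) ^ 2) := by ring

lemma not_summable_re_div_sq_add_nat_mul {c b : ℂ} (hc : 0 ≤ c.re) (hb : 0 < b.re) :
    ¬ Summable fun n : ℕ => (c + n * b).re / (1 + ‖c + n * b‖) ^ 2 := by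
  set K := b.re / (1 + ‖c‖ + ‖b‖) ^ 2
  have hK : 0 < K := by positivity
  refine fun h => Real.not_summable_one_div_natCast ((summable_mul_left_iff hK.ne').mp
    (h.of_nonneg_of_le (fun n => by positivity) fun n => ?_))
  have hre : n * b.re ≤ (c + n * b).re := by simpa using hc
  rcases n.eq_zero_or_pos with rfl | hn
  · simpa using div_nonneg hc (sq_nonneg _)
  have hn1 : (1 : ℝ) ≤ n := by exact_mod_cast hn
  have hnorm : 1 + ‖c + n * b‖ ≤ n * (1 + ‖c‖ + ‖b‖) := by
    have := norm_add_le c (n * b)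
    rw [norm_mul, norm_natCast] at this
    nlinarith [norm_nonneg c]
  calc K * (1 / n) = n * b.re / (n * (1 + ‖c‖ + ‖b‖)) ^ 2 := by
        simp only [K]
        field_simp
    _ ≤ (c + n * b).re / (1 + ‖c + n * b‖) ^ 2 := by
        gcongr
        exact (by positivity : 0 ≤ n * b.re).trans hre

end Zeros

section Density

variable {ι : Type*} {a : ι → ℂ} {g : ℂ → ℂ} {δ ε : ℝ}

lemma exists_mem_span_eqOn_laplace (ha : ∀ i, 0 < (a i).re) {u : Lp ℂ 2 (volume : Measure ℝ)}
    (hu : u ∈ Submodule.span ℂ (range fun i => (memLp_decayExp (ha i)).toLp _)) :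
    ∃ h ∈ Submodule.span ℂ (range fun i w => (w + a i)⁻¹),
      EqOn (laplace u) h {w : ℂ | 0 < w.re} := by
  induction hu using Submodule.span_induction with
  | mem u hu =>
    obtain ⟨i, rfl⟩ := hu
    refine ⟨_, Submodule.subset_span ⟨i, rfl⟩, fun w (hw : 0 < w.re) => ?_⟩
    simp only [laplace_toLp, laplace_decayExp (add_pos hw (ha i))]
  | zero =>
    refine ⟨0, zero_mem _, fun w hw => ?_⟩
    obtain ⟨L, hL⟩ := exists_continuousLinearMap_eq_laplace hw
    rw [← hL, map_zero, Pi.zero_apply]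
  | add u v _ _ hu hv =>
    obtain ⟨h, hh, hhu⟩ := hu
    obtain ⟨k, hk, hkv⟩ := hv
    refine ⟨h + k, add_mem hh hk, fun w hw => ?_⟩
    obtain ⟨L, hL⟩ := exists_continuousLinearMap_eq_laplace hw
    rw [← hL, map_add, hL, hL, hhu hw, hkv hw, Pi.add_apply]
  | smul c u _ hu =>
    obtain ⟨h, hh, hhu⟩ := hu
    refine ⟨c • h, Submodule.smul_mem _ c hh, fun w hw => ?_⟩
    obtain ⟨L, hL⟩ := exists_continuousLinearMap_eq_laplace hw
    rw [← hL, map_smul, hL, hhu hw, Pi.smul_apply]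

lemma eqOn_laplace_zero_of_inner_eq_zero (hδ : 0 < δ) (ha : ∀ i, δ ≤ (a i).re)
    (hinj : Function.Injective a) (hns : ¬ Summable fun i => (a i).re / (1 + ‖a i‖) ^ 2)
    {v : Lp ℂ 2 (volume : Measure ℝ)}
    (hv : ∀ i, ⟪(memLp_decayExp (hδ.trans_le (ha i))).toLp _, v⟫_ℂ = 0) :
    EqOn (laplace v) 0 {w : ℂ | 0 < w.re} := by
  refine (memH2_laplace (Lp.memLp v)).eqOn_zero_of_not_summable (a := fun i => conj (a i)) hδ
    (by simpa using ha) (star_injective.comp hinj) (by simpa using hns) fun i => ?_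
  rw [← inner_toLp_decayExp (hδ.trans_le (ha i)), hv]

theorem MemH2.exists_mem_span_H2normSq_sub_lt (hg : MemH2 g) (hδ : 0 < δ) (ha : ∀ i, δ ≤ (a i).re)
    (hinj : Function.Injective a) (hns : ¬ Summable fun i => (a i).re / (1 + ‖a i‖) ^ 2)
    (hε : 0 < ε) :
    ∃ h ∈ Submodule.span ℂ (range fun i w => (w + a i)⁻¹),
      H2normSq (g - h) < ENNReal.ofReal ε ^ 2 := by
  have ha' : ∀ i, 0 < (a i).re := fun i => hδ.trans_le (ha i)
  obtain ⟨F, hF⟩ := hg.exists_laplace_eq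
  obtain ⟨u, hu, v, hv, huv⟩ := exists_mem_span_exists_forall_inner_eq_zero (𝕜 := ℂ)
    (fun i => (memLp_decayExp (ha' i)).toLp _) F (ε := ε / √(2 * π)) (by positivity)
  have hv0 := eqOn_laplace_zero_of_inner_eq_zero hδ ha hinj hns hv
  obtain ⟨h, hh, hhu⟩ := exists_mem_span_eqOn_laplace ha' hu
  have hgh : EqOn (g - h) (laplace (F - v - u : Lp ℂ 2 (volume : Measure ℝ))) {w : ℂ | 0 < w.re} :=
    fun w hw => by
      obtain ⟨L, hL⟩ := exists_continuousLinearMap_eq_laplace hw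
      rw [← hL, map_sub, map_sub, hL, hL, hL, hF hw, hv0 hw, hhu hw, Pi.zero_apply, sub_zero,
        Pi.sub_apply]
  refine ⟨h, hh, ?_⟩
  calc H2normSq (g - h) = H2normSq (laplace (F - v - u : Lp ℂ 2 (volume : Measure ℝ))) :=
        H2normSq_congr hgh
    _ ≤ ENNReal.ofReal (2 * π) * ∫⁻ t, ‖(F - v - u : Lp ℂ 2 (volume : Measure ℝ)) t‖ₑ ^ 2 :=
        H2normSq_laplace_le (Lp.memLp _)
    _ = ENNReal.ofReal (√(2 * π) * ‖F - v - u‖) ^ 2 := by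
        rw [← eLpNorm_two_sq, ← Lp.enorm_def, ← ofReal_norm, ← ENNReal.ofReal_pow (by positivity),
          ← ENNReal.ofReal_pow (by positivity), ← ENNReal.ofReal_mul (by positivity), mul_pow,
          Real.sq_sqrt (by positivity)]
    _ < ENNReal.ofReal ε ^ 2 := by
        gcongr
        rwa [ENNReal.ofReal_lt_ofReal_iff hε, ← lt_div_iff₀' (by positivity)]

end Density

/-- Parabolic non-automorphisms induce cyclic composition operators, with
cyclic vector the reproducing kernel `k₁(w) = 1/(w+1)`. -/
theorem parabolic_cyclic (b : ℂ) (hb : 0 < b.re)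
    (φ : ℂ → ℂ) (hφ : ∀ w, φ w = w + b)
    (k₁ : ℂ → ℂ) (hk : ∀ w, k₁ w = 1 / (w + 1)) :
    ∀ g : ℂ → ℂ, MemH2 g → ∀ ε : ℝ, 0 < ε →
      ∃ h ∈ Submodule.span ℂ (Set.range fun n : ℕ => k₁ ∘ φ^[n]),
        H2normSq (g - h) < ENNReal.ofReal ε ^ 2 := by
  intro g hg ε hε
  obtain rfl : φ = (· + b) := funext hφ
  have hb0 : b ≠ 0 := fun h => hb.ne' (by simp [h])
  have hkernel : (fun n : ℕ => k₁ ∘ (· + b)^[n]) = fun (n : ℕ) w => (w + (1 + n * b))⁻¹ := by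
    ext n w
    rw [Function.comp_apply, hk, add_right_iterate_apply, nsmul_eq_mul, one_div, add_assoc,
      add_comm 1]
  have hre : ∀ n : ℕ, 1 ≤ (1 + n * b).re := fun n => by
    simpa using mul_nonneg n.cast_nonneg hb.le
  have hinj : Function.Injective fun n : ℕ => 1 + n * b := fun m n hmn => by
    simpa [hb0] using hmn
  have hns := not_summable_re_div_sq_add_nat_mul (c := 1) (by simp) hb
  rw [hkernel]
  exact hg.exists_mem_span_H2normSq_sub_lt one_pos hre hinj hns hε
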